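/- arXiv:1504.06023 — 4 statements merged into one kernel-verified Lean document; each statement's English description precedes it below -/
import Mathlib

section
/- Let f ∈ ℝ[x,y,z] be homogeneous of degree d and irreducible as a polynomial in ℂ[x,y,z]. Let a = (a₁, …, a_d) be a vector of homogeneous polynomials of degree d−1 in ℂ[x,y,z] such that f does not divide a₁. Suppose M = xM₁ + yM₂ + zM₃ and N = xN₁ + yN₂ + zN₃ are Hermitian pencils of d×d matrices such that det(M) and det(N) are not identically zero, and both satisfy a·M = (f, 0, …, 0), M·ā^T = (f, 0, …, 0)^T, a·N = (f, 0, …, 0), and N·ā^T = (f, 0, …, 0)^T as identities of vectors of polynomials. Then M = N, i.e., M₁ = N₁, M₂ = N₂, and M₃ = N₃. -/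
/-- The complexification of a real polynomial in three variables. -/
noncomputable def complexify (f : MvPolynomial (Fin 3) ℝ) : MvPolynomial (Fin 3) ℂ :=
  MvPolynomial.map (algebraMap ℝ ℂ) f

/-- The Hermitian pencil `x M₁ + y M₂ + z M₃` as a matrix of polynomials in `ℂ[x,y,z]`. -/
noncomputable def pencil {d : ℕ} (M₁ M₂ M₃ : Matrix (Fin d) (Fin d) ℂ) :
    Matrix (Fin d) (Fin d) (MvPolynomial (Fin 3) ℂ) := fun i j =>
  MvPolynomial.X 0 * MvPolynomial.C (M₁ i j) +
    MvPolynomial.X 1 * MvPolynomial.C (M₂ i j) +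
    MvPolynomial.X 2 * MvPolynomial.C (M₃ i j)

lemma hp_minor {R : Type*} [CommRing R] {d : ℕ} (M : Matrix (Fin d) (Fin d) R) (f : R)
    (v : Fin d → R) (hv : ∀ i, f ∣ (M.mulVec v) i) (z k i : Fin d) :
    f ∣ M.adjugate k z * v i - v k * M.adjugate i z := by
  set M' := M.updateRow z (Pi.single k 1) with hM'
  have h1 : M'.adjugate.mulVec (M'.mulVec v) i = M'.det * v i := by
    rw [Matrix.mulVec_mulVec, Matrix.adjugate_mul, Matrix.smul_mulVec, Matrix.one_mulVec]
    simp
  have hdet : M'.det = M.adjugate k z := by rw [Matrix.adjugate_apply]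
  have hadj : M'.adjugate i z = M.adjugate i z := by
    rw [Matrix.adjugate_apply, Matrix.adjugate_apply, hM', Matrix.updateRow_idem]
  have hz : M'.mulVec v z = v k := by
    simp [hM', Matrix.mulVec, dotProduct, Pi.single_apply]
  have hl : ∀ l, l ≠ z → M'.mulVec v l = M.mulVec v l := by
    intro l hl
    simp [hM', Matrix.mulVec, hl]
  have h2 : M'.adjugate.mulVec (M'.mulVec v) i =
      ∑ l, M'.adjugate i l * M'.mulVec v l := rfl
  rw [h2, ← Finset.add_sum_erase _ _ (Finset.mem_univ z), hz, hadj, hdet] at h1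
  rw [← h1]
  have : M.adjugate i z * v k + ∑ x ∈ Finset.univ.erase z, M'.adjugate i x * M'.mulVec v x
      - v k * M.adjugate i z = ∑ x ∈ Finset.univ.erase z, M'.adjugate i x * M'.mulVec v x := by
    ring
  rw [this]
  refine Finset.dvd_sum fun l hm => ?_
  rw [hl l (Finset.ne_of_mem_erase hm)]
  exact Dvd.dvd.mul_left (hv l) _

lemma hp_key {d : ℕ} (z : Fin d) (f : MvPolynomial (Fin 3) ℂ) (hf : f.IsHomogeneous d)
    (hirr : Irreducible f) (a b : Fin d → MvPolynomial (Fin 3) ℂ) (ha : ¬ f ∣ a z)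
    (M : Matrix (Fin d) (Fin d) (MvPolynomial (Fin 3) ℂ))
    (hM : ∀ i j, (M i j).IsHomogeneous 1) (hdet : M.det ≠ 0)
    (haM : ∀ j, ∑ i, a i * M i j = if j = z then f else 0)
    (hMb : ∀ i, ∑ j, M i j * b j = if i = z then f else 0) :
    ∃ P : Matrix (Fin d) (Fin d) (MvPolynomial (Fin 3) ℂ),
      P * M = f • (1 : Matrix (Fin d) (Fin d) (MvPolynomial (Fin 3) ℂ)) ∧
      M * P = f • (1 : Matrix (Fin d) (Fin d) (MvPolynomial (Fin 3) ℂ)) ∧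
      ∀ i j, f ∣ a z * P i j - a j * b i := by
  have hf0 : f ≠ 0 := hirr.ne_zero
  have hprime : Prime f := hirr.prime
  have h1 : Matrix.vecMul a M = Pi.single z f := by
    ext1 j
    simp [Matrix.vecMul, dotProduct, haM, Pi.single_apply]
  have h2 : M.mulVec b = Pi.single z f := by
    ext1 j
    simp [Matrix.mulVec, dotProduct, hMb, Pi.single_apply]
  have h3 : ∀ i, a i * M.det = f * M.adjugate z i := by
    intro i
    have := congrArg (fun v => Matrix.vecMul v M.adjugate i) h1
    simp only [Matrix.vecMul_vecMul, Matrix.mul_adjugate, Matrix.vecMul_smul,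
      Matrix.vecMul_one] at this
    simpa [mul_comm, Matrix.single_vecMul] using this
  have h4 : ∀ i, b i * M.det = f * M.adjugate i z := by
    intro i
    have := congrArg (fun v => M.adjugate.mulVec v i) h2
    simp only [Matrix.mulVec_mulVec, Matrix.adjugate_mul, Matrix.smul_mulVec,
      Matrix.one_mulVec] at this
    simpa [mul_comm, Matrix.mulVec_single] using this
  have h5 : f ∣ M.det := by
    rcases hprime.dvd_or_dvd (Dvd.intro _ (h3 z).symm) with h | h
    · exact absurd h ha
    · exact h
  have hdh : M.det.IsHomogeneous d := by
    rw [Matrix.det_apply]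
    refine MvPolynomial.IsHomogeneous.sum _ _ _ fun σ _ => ?_
    have := MvPolynomial.IsHomogeneous.prod Finset.univ (fun i => M (σ i) i) (fun _ => 1)
      (fun i _ => hM _ _)
    simp only [Finset.sum_const, Finset.card_univ, Fintype.card_fin, smul_eq_mul, mul_one] at this
    rcases Int.units_eq_one_or (Equiv.Perm.sign σ) with h | h
    · simpa [h] using this
    · simpa [h] using this.neg
  obtain ⟨h, hh⟩ := h5
  have hh0 : h ≠ 0 := by rintro rfl; simp [hh] at hdet
  have hdeg : h.totalDegree = 0 := by
    have e := MvPolynomial.totalDegree_mul_of_isDomain hf0 hh0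
    rw [← hh, hdh.totalDegree hdet, hf.totalDegree hf0] at e
    omega
  rw [MvPolynomial.totalDegree_eq_zero_iff_eq_C] at hdeg
  set c := h.coeff 0
  have hc : c ≠ 0 := by intro h0; rw [hdeg, h0] at hh0; simp at hh0
  have hcc : (MvPolynomial.C c⁻¹ : MvPolynomial (Fin 3) ℂ) * h = 1 := by
    rw [hdeg, ← MvPolynomial.C_mul, inv_mul_cancel₀ hc, MvPolynomial.C_1]
  have h3' : ∀ i, M.adjugate z i = h * a i := fun i => by
    apply mul_left_cancel₀ hf0; rw [← h3, hh]; ring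
  have h4' : ∀ i, M.adjugate i z = h * b i := fun i => by
    apply mul_left_cancel₀ hf0; rw [← h4, hh]; ring
  set u : MvPolynomial (Fin 3) ℂ := MvPolynomial.C c⁻¹
  have hud : u * M.det = f := by rw [hh]; linear_combination f * hcc
  refine ⟨u • M.adjugate, ?_, ?_, ?_⟩
  · rw [Matrix.smul_mul, Matrix.adjugate_mul, smul_smul, hud]
  · rw [Matrix.mul_smul, Matrix.mul_adjugate, smul_smul, hud]
  · intro i j
    have := hp_minor M f (fun l => M.adjugate l j) (fun l => by
      have : M.mulVec (fun l => M.adjugate l j) l = (M * M.adjugate) l j := rfl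
      rw [this, Matrix.mul_adjugate, hh]
      simp only [Matrix.smul_apply, smul_eq_mul, mul_assoc]
      exact Dvd.intro _ rfl) z z i
    simp only [h3', h4'] at this
    have e : a z * (u • M.adjugate) i j - a j * b i =
        u * u * (h * a z * M.adjugate i j - h * a j * (h * b i)) := by
      simp only [Matrix.smul_apply, smul_eq_mul]
      linear_combination (-(a z * u * M.adjugate i j) + a j * b i * (u * h + 1)) * hcc
    rw [e]
    exact Dvd.dvd.mul_left this _

lemma hp_hom {d : ℕ} (M₁ M₂ M₃ : Matrix (Fin d) (Fin d) ℂ) (i j : Fin d) :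
    (pencil M₁ M₂ M₃ i j).IsHomogeneous 1 := by
  have h : ∀ (k : Fin 3) (c : ℂ),
      (MvPolynomial.X k * MvPolynomial.C c : MvPolynomial (Fin 3) ℂ).IsHomogeneous 1 := by
    intro k c
    simpa using (MvPolynomial.isHomogeneous_X ℂ k).mul (MvPolynomial.isHomogeneous_C (Fin 3) c)
  exact ((h _ _).add (h _ _)).add (h _ _)

/-- Let `f ∈ ℝ[x,y,z]` be homogeneous of degree `d`, irreducible in
`ℂ[x,y,z]`. Let `a = (a₁, …, a_d)` be homogeneous polynomials of degree `d - 1` with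
`f ∤ a₁`. If `M` and `N` are Hermitian pencils with not identically zero determinant
both satisfying `a · M = (f, 0, …, 0)` and `M · āᵀ = (f, 0, …, 0)ᵀ`, then `M = N`. -/
theorem hermitian_pencil_unique {d : ℕ} (hd : 0 < d)
    (f : MvPolynomial (Fin 3) ℝ) (hfhom : f.IsHomogeneous d)
    (hirr : Irreducible (complexify f))
    (a : Fin d → MvPolynomial (Fin 3) ℂ)
    (hahom : ∀ i, (a i).IsHomogeneous (d - 1))
    (hndvd : ¬ complexify f ∣ a ⟨0, hd⟩)
    (M₁ M₂ M₃ N₁ N₂ N₃ : Matrix (Fin d) (Fin d) ℂ)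
    (hM₁ : M₁.IsHermitian) (hM₂ : M₂.IsHermitian) (hM₃ : M₃.IsHermitian)
    (hN₁ : N₁.IsHermitian) (hN₂ : N₂.IsHermitian) (hN₃ : N₃.IsHermitian)
    (hdetM : (pencil M₁ M₂ M₃).det ≠ 0) (hdetN : (pencil N₁ N₂ N₃).det ≠ 0)
    (haM : ∀ j, ∑ i, a i * pencil M₁ M₂ M₃ i j =
      if j = ⟨0, hd⟩ then complexify f else 0)
    (hMa : ∀ i, ∑ j, pencil M₁ M₂ M₃ i j * MvPolynomial.map (starRingEnd ℂ) (a j) =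
      if i = ⟨0, hd⟩ then complexify f else 0)
    (haN : ∀ j, ∑ i, a i * pencil N₁ N₂ N₃ i j =
      if j = ⟨0, hd⟩ then complexify f else 0)
    (hNa : ∀ i, ∑ j, pencil N₁ N₂ N₃ i j * MvPolynomial.map (starRingEnd ℂ) (a j) =
      if i = ⟨0, hd⟩ then complexify f else 0) :
    M₁ = N₁ ∧ M₂ = N₂ ∧ M₃ = N₃ := by
  have hcf : (complexify f).IsHomogeneous d := hfhom.map _
  obtain ⟨P, hPM, -, hP⟩ := hp_key ⟨0, hd⟩ _ hcf hirr a _ hndvd _ (hp_hom M₁ M₂ M₃) hdetM haM hMa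
  obtain ⟨Q, -, hNQ, hQ⟩ := hp_key ⟨0, hd⟩ _ hcf hirr a _ hndvd _ (hp_hom N₁ N₂ N₃) hdetN haN hNa
  set F := complexify f
  have hF0 : F ≠ 0 := hirr.ne_zero
  have hd' : ∀ i j, F ∣ P i j - Q i j := by
    intro i j
    have := dvd_sub (hP i j) (hQ i j)
    rw [sub_sub_sub_cancel_right, ← mul_sub] at this
    exact (hirr.prime.dvd_or_dvd this).resolve_left hndvd
  choose G hG using hd'
  have hPQ : P = Q + F • (Matrix.of G) := by
    ext1 i j
    simp only [Matrix.add_apply, Matrix.smul_apply, Matrix.of_apply, smul_eq_mul]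
    rw [← hG]; ring
  set M := pencil M₁ M₂ M₃ with hMdef
  set N := pencil N₁ N₂ N₃ with hNdef
  have hk : F • N = F • (M + N * Matrix.of G * M) := by
    calc F • N = N * (P * M) := by rw [hPM]; simp
      _ = (N * Q) * M + F • (N * Matrix.of G * M) := by
        rw [hPQ, Matrix.add_mul, Matrix.mul_add, Matrix.smul_mul, Matrix.mul_smul,
          Matrix.mul_assoc, Matrix.mul_assoc]
      _ = _ := by rw [hNQ]; simp
  have hNM : ∀ i j, N i j = M i j + ∑ l, (N * Matrix.of G) i l * M l j := by
    intro i j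
    have := congrFun (congrFun hk i) j
    exact mul_left_cancel₀ hF0 this
  have e0 : ∀ (A B C : Matrix (Fin d) (Fin d) ℂ) i j,
      MvPolynomial.constantCoeff (pencil A B C i j) = 0 := by
    intro A B C i j; simp [pencil]
  have eN : ∀ i l, MvPolynomial.constantCoeff ((N * Matrix.of G) i l) = 0 := by
    intro i l
    simp [Matrix.mul_apply, hNdef, e0]
  have hD : ∀ (k : Fin 3) i j, MvPolynomial.eval (0 : Fin 3 → ℂ) (MvPolynomial.pderiv k (N i j)) =
      MvPolynomial.eval (0 : Fin 3 → ℂ) (MvPolynomial.pderiv k (M i j)) := by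
    intro k i j
    rw [hNM]
    simp [Derivation.leibniz, eN, hMdef, e0]
  have d0 : ∀ (A B C : Matrix (Fin d) (Fin d) ℂ) i j, MvPolynomial.eval (0 : Fin 3 → ℂ)
      (MvPolynomial.pderiv 0 (pencil A B C i j)) = A i j := by
    intro A B C i j; simp [pencil, Derivation.leibniz, MvPolynomial.pderiv_X, Pi.single_apply]
  have d1 : ∀ (A B C : Matrix (Fin d) (Fin d) ℂ) i j, MvPolynomial.eval (0 : Fin 3 → ℂ)
      (MvPolynomial.pderiv 1 (pencil A B C i j)) = B i j := by
    intro A B C i j; simp [pencil, Derivation.leibniz, MvPolynomial.pderiv_X, Pi.single_apply]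
  have d2 : ∀ (A B C : Matrix (Fin d) (Fin d) ℂ) i j, MvPolynomial.eval (0 : Fin 3 → ℂ)
      (MvPolynomial.pderiv 2 (pencil A B C i j)) = C i j := by
    intro A B C i j; simp [pencil, Derivation.leibniz, MvPolynomial.pderiv_X, Pi.single_apply]
  refine ⟨?_, ?_, ?_⟩
  · ext i j; have := hD 0 i j; rw [hNdef, hMdef, d0, d0] at this; exact this.symm
  · ext i j; have := hD 1 i j; rw [hNdef, hMdef, d1, d1] at this; exact this.symm
  · ext i j; have := hD 2 i j; rw [hNdef, hMdef, d2, d2] at this; exact this.symm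
end

section
/- Let f ∈ ℝ[x,y,z] be homogeneous of degree d and irreducible as a polynomial in ℂ[x,y,z]. Let a = (a₁, …, a_d) be a vector of homogeneous polynomials of degree d−1 in ℂ[x,y,z] such that f does not divide a_i for at least one index i. Let M be a d×d matrix whose entries are linear forms in ℂ[x,y,z], such that a·M = (f, 0, …, 0) as an identity of vectors of polynomials and det(M) is not identically zero. Then det(M) = α·f for some nonzero constant α ∈ ℂ. -/
/-- Let `f ∈ ℝ[x,y,z]` be homogeneous of degree `d` and irreducible in
`ℂ[x,y,z]`. Let `a = (a₁, …, a_d)` be homogeneous polynomials of degree `d - 1` in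
`ℂ[x,y,z]` with `f ∤ aᵢ` for some `i`, and let `M` be a `d × d` matrix of linear forms
with `a · M = (f, 0, …, 0)` and `det M ≠ 0`. Then `det M = α • f` for some nonzero
constant `α ∈ ℂ`. -/
theorem det_eq_const_mul_of_row_relation {d : ℕ} (hd : 0 < d)
    (f : MvPolynomial (Fin 3) ℝ) (hfhom : f.IsHomogeneous d)
    (hirr : Irreducible (complexify f))
    (a : Fin d → MvPolynomial (Fin 3) ℂ)
    (hahom : ∀ i, (a i).IsHomogeneous (d - 1))
    (hndvd : ∃ i, ¬ complexify f ∣ a i)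
    (M : Matrix (Fin d) (Fin d) (MvPolynomial (Fin 3) ℂ))
    (hlin : ∀ i j, (M i j).IsHomogeneous 1)
    (ha : ∀ j, ∑ i, a i * M i j = if j = ⟨0, hd⟩ then complexify f else 0)
    (hdet : M.det ≠ 0) :
    ∃ α : ℂ, α ≠ 0 ∧ M.det = MvPolynomial.C α * complexify f := by
  obtain ⟨i, hi⟩ := hndvd
  have hF : (complexify f).IsHomogeneous d := hfhom.map _
  have hvec : Matrix.vecMul a M = fun j => if j = ⟨0, hd⟩ then complexify f else 0 := by
    funext j
    exact ha j
  have h1 : M.det * a i = complexify f * M.adjugate ⟨0, hd⟩ i := by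
    have h2 : Matrix.vecMul (Matrix.vecMul a M) M.adjugate = M.det • a := by
      rw [Matrix.vecMul_vecMul, Matrix.mul_adjugate, Matrix.vecMul_smul, Matrix.vecMul_one]
    have h3 := congrFun h2 i
    rw [hvec] at h3
    simp only [Matrix.vecMul, dotProduct, ite_mul, zero_mul, Finset.sum_ite_eq',
      Finset.sum_ite_eq, Finset.mem_univ, if_true, Pi.smul_apply, smul_eq_mul] at h3
    exact h3.symm
  have hdvd : complexify f ∣ M.det :=
    (hirr.prime.dvd_or_dvd ⟨_, h1⟩).resolve_right hi
  obtain ⟨g, hg⟩ := hdvd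
  have hg0 : g ≠ 0 := by
    rintro rfl
    exact hdet (by rw [hg, mul_zero])
  have hdethom : M.det.IsHomogeneous d := by
    rw [Matrix.det_apply']
    refine MvPolynomial.IsHomogeneous.sum _ _ _ fun σ _ => ?_
    have hp : (∏ k, M (σ k) k).IsHomogeneous (∑ _k : Fin d, 1) :=
      MvPolynomial.IsHomogeneous.prod _ _ _ fun k _ => hlin _ _
    have hc : (((Equiv.Perm.sign σ : ℤˣ) : ℤ) : MvPolynomial (Fin 3) ℂ)
        = MvPolynomial.C (((Equiv.Perm.sign σ : ℤˣ) : ℤ) : ℂ) := by simp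
    rw [hc]
    have hs : (∑ _k : Fin d, 1) = d := by simp
    rw [hs] at hp
    exact hp.C_mul _
  have hdeg := MvPolynomial.totalDegree_mul_of_isDomain hirr.ne_zero hg0
  rw [← hg, hdethom.totalDegree hdet, hF.totalDegree hirr.ne_zero] at hdeg
  have hgC := MvPolynomial.totalDegree_eq_zero_iff_eq_C.mp (show g.totalDegree = 0 by omega)
  refine ⟨MvPolynomial.coeff 0 g, ?_, ?_⟩
  · intro h
    rw [h, map_zero] at hgC
    exact hg0 hgC
  · rw [← hgC, hg, mul_comm]
end

section
/- Let M₁, M₂, M₃ be Hermitian d×d complex matrices and e ∈ ℝ³ a point such that e₁M₁ + e₂M₂ + e₃M₃ is positive definite. Then the polynomial f(p) = det(p₁M₁ + p₂M₂ + p₃M₃), which takes real values on ℝ³, is hyperbolic with respect to e: f(e) > 0 and for every p ∈ ℝ³ all complex roots of the univariate polynomial t ↦ det((te₁+p₁)M₁ + (te₂+p₂)M₂ + (te₃+p₃)M₃) are real. -/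
open scoped ComplexOrder

theorem aux_pencil_herm {d : ℕ} (M₁ M₂ M₃ : Matrix (Fin d) (Fin d) ℂ)
    (h₁ : M₁.IsHermitian) (h₂ : M₂.IsHermitian) (h₃ : M₃.IsHermitian) (p : Fin 3 → ℝ) :
    ((p 0 : ℂ) • M₁ + (p 1 : ℂ) • M₂ + (p 2 : ℂ) • M₃).IsHermitian := by
  unfold Matrix.IsHermitian
  simp only [Matrix.conjTranspose_add, Matrix.conjTranspose_smul, h₁.eq, h₂.eq, h₃.eq,
    Complex.star_def, Complex.conj_ofReal]

/-- If `M₁, M₂, M₃` are Hermitian `d × d` complex matrices and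
`e ∈ ℝ³` is such that `e₁M₁ + e₂M₂ + e₃M₃` is positive definite, then the polynomial
`p ↦ det (p₁M₁ + p₂M₂ + p₃M₃)` takes real values on `ℝ³` and is hyperbolic with respect
to `e`: its value at `e` is positive, and for every `p ∈ ℝ³` all complex roots of
`t ↦ det ((te₁+p₁)M₁ + (te₂+p₂)M₂ + (te₃+p₃)M₃)` are real. -/
theorem det_hermitian_pencil_hyperbolic {d : ℕ}
    (M₁ M₂ M₃ : Matrix (Fin d) (Fin d) ℂ)
    (h₁ : M₁.IsHermitian) (h₂ : M₂.IsHermitian) (h₃ : M₃.IsHermitian)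
    (e : Fin 3 → ℝ)
    (hpd : ((e 0 : ℂ) • M₁ + (e 1 : ℂ) • M₂ + (e 2 : ℂ) • M₃).PosDef) :
    (∀ p : Fin 3 → ℝ,
      (((p 0 : ℂ) • M₁ + (p 1 : ℂ) • M₂ + (p 2 : ℂ) • M₃).det).im = 0) ∧
    0 < (((e 0 : ℂ) • M₁ + (e 1 : ℂ) • M₂ + (e 2 : ℂ) • M₃).det).re ∧
    ∀ p : Fin 3 → ℝ, ∀ t : ℂ,
      ((t * (e 0 : ℂ) + (p 0 : ℂ)) • M₁ + (t * (e 1 : ℂ) + (p 1 : ℂ)) • M₂ +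
        (t * (e 2 : ℂ) + (p 2 : ℂ)) • M₃).det = 0 → t.im = 0 := by
  have key := aux_pencil_herm M₁ M₂ M₃ h₁ h₂ h₃
  refine ⟨fun p => ?_, ?_, fun p t h => ?_⟩
  · have h := Matrix.det_conjTranspose ((p 0 : ℂ) • M₁ + (p 1 : ℂ) • M₂ + (p 2 : ℂ) • M₃)
    rw [(key p).eq] at h
    exact Complex.conj_eq_iff_im.mp h.symm
  · exact (Complex.pos_iff.mp hpd.det_pos).1
  · obtain ⟨v, hv, hz⟩ := Matrix.exists_mulVec_eq_zero_iff.mpr h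
    have hB := key p
    have hsplit : ((t * (e 0 : ℂ) + (p 0 : ℂ)) • M₁ + (t * (e 1 : ℂ) + (p 1 : ℂ)) • M₂ +
        (t * (e 2 : ℂ) + (p 2 : ℂ)) • M₃) =
        t • ((e 0 : ℂ) • M₁ + (e 1 : ℂ) • M₂ + (e 2 : ℂ) • M₃) +
        ((p 0 : ℂ) • M₁ + (p 1 : ℂ) • M₂ + (p 2 : ℂ) • M₃) := by
      module
    rw [hsplit] at hz
    generalize ((e 0 : ℂ) • M₁ + (e 1 : ℂ) • M₂ + (e 2 : ℂ) • M₃) = A at hpd hz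
    generalize ((p 0 : ℂ) • M₁ + (p 1 : ℂ) • M₂ + (p 2 : ℂ) • M₃) = B at hB hz
    have hA := Complex.pos_iff.mp (hpd.dotProduct_mulVec_pos hv)
    have hBim : (star v ⬝ᵥ B.mulVec v).im = 0 := hB.im_star_dotProduct_mulVec_self v
    have h0 : t * (star v ⬝ᵥ A.mulVec v) + star v ⬝ᵥ B.mulVec v = 0 := by
      have := congrArg (fun w => star v ⬝ᵥ w) hz
      simpa [Matrix.add_mulVec, Matrix.smul_mulVec, dotProduct_add, dotProduct_smul] using this
    have h2 := congrArg Complex.im h0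
    simp only [Complex.add_im, Complex.mul_im, hBim, ← hA.2, Complex.zero_im, mul_zero,
      zero_add, add_zero] at h2
    exact (mul_eq_zero.mp h2).resolve_right hA.1.ne'
end

section
/- Let f = x⁴ − 4x²y² + y⁴ − 4x²z² − 2y²z² + z⁴ ∈ ℝ[x,y,z] and define the Hermitian 4×4 complex matrices M₁ = (1/8)·[[14, 0, 2i, 0], [0, 1, 0, −i], [−2i, 0, 1, i], [0, i, −i, 4]], M₂ = (1/8)·[[0, 0, −2, 2i], [0, 0, 0, 2], [−2, 0, 0, 0], [−2i, 2, 0, 0]], and M₃ = (1/8)·[[0, 2, 0, −2i], [2, 0, 0, 0], [0, 0, 0, −2], [2i, 0, −2, 0]]. Then det(xM₁ + yM₂ + zM₃) = (1/256)·f as polynomials in ℂ[x,y,z], and the matrix M₁ = 1·M₁ + 0·M₂ + 0·M₃ is positive definite; consequently f is hyperbolic with respect to e = (1, 0, 0). -/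
open scoped ComplexOrder

/-- `f` is hyperbolic with respect to `e ∈ ℝ³`: `f(e) ≠ 0` and for every `p ∈ ℝ³` all
complex roots of `t ↦ f(te + p)` are real. -/
def IsHyperbolic (f : MvPolynomial (Fin 3) ℝ) (e : Fin 3 → ℝ) : Prop :=
  MvPolynomial.eval e f ≠ 0 ∧
    ∀ p : Fin 3 → ℝ, ∀ t : ℂ,
      MvPolynomial.eval (fun i => t * (e i : ℂ) + (p i : ℂ)) (complexify f) = 0 →
      t.im = 0

/-- The hyperbolic quartic `x⁴ - 4x²y² + y⁴ - 4x²z² - 2y²z² + z⁴`. -/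
noncomputable def quartic : MvPolynomial (Fin 3) ℝ :=
  MvPolynomial.X 0 ^ 4 - 4 * MvPolynomial.X 0 ^ 2 * MvPolynomial.X 1 ^ 2 +
    MvPolynomial.X 1 ^ 4 - 4 * MvPolynomial.X 0 ^ 2 * MvPolynomial.X 2 ^ 2 -
    2 * MvPolynomial.X 1 ^ 2 * MvPolynomial.X 2 ^ 2 + MvPolynomial.X 2 ^ 4

noncomputable def Mx : Matrix (Fin 4) (Fin 4) ℂ :=
  (1 / 8 : ℂ) • !![14, 0, 2 * Complex.I, 0;
                   0, 1, 0, -Complex.I;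
                   -2 * Complex.I, 0, 1, Complex.I;
                   0, Complex.I, -Complex.I, 4]

noncomputable def My : Matrix (Fin 4) (Fin 4) ℂ :=
  (1 / 8 : ℂ) • !![0, 0, -2, 2 * Complex.I;
                   0, 0, 0, 2;
                   -2, 0, 0, 0;
                   -2 * Complex.I, 2, 0, 0]

noncomputable def Mz : Matrix (Fin 4) (Fin 4) ℂ :=
  (1 / 8 : ℂ) • !![0, 2, 0, -2 * Complex.I;
                   2, 0, 0, 0;
                   0, 0, 0, -2;
                   2 * Complex.I, 0, -2, 0]

theorem det_aux : (pencil Mx My Mz).det =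
    MvPolynomial.C (1 / 256 : ℂ) * complexify quartic := by
  apply MvPolynomial.funext
  intro v
  have hI : Complex.I ^ 2 = -1 := Complex.I_sq
  rw [RingHom.map_det]
  simp [Matrix.det_succ_row_zero, Fin.sum_univ_succ, Fin.succAbove, pencil, Mx, My, Mz,
    complexify, quartic]
  ring_nf
  have h3 : Complex.I ^ 3 = -Complex.I := by rw [pow_succ, hI]; ring
  have h4 : Complex.I ^ 4 = 1 := Complex.I_pow_four
  simp only [hI, h3, h4]
  ring

theorem quad_aux (v : Fin 4 → ℂ) : star v ⬝ᵥ (Mx.mulVec v) =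
    (((1 / 8 : ℝ) * (Complex.normSq (v 1 - Complex.I * v 3)
      + Complex.normSq (v 2 + Complex.I * v 3 - 2 * Complex.I * v 0)
      + 8 * Complex.normSq (v 0) + 2 * Complex.normSq (v 0 + v 3) : ℝ) : ℝ) : ℂ) := by
  apply Complex.ext
  · simp [dotProduct, Matrix.mulVec, Fin.sum_univ_succ, Mx, Complex.normSq_apply]
    ring
  · simp [dotProduct, Matrix.mulVec, Fin.sum_univ_succ, Mx]
    ring

theorem posDef_aux : Mx.PosDef := by
  apply Matrix.PosDef.of_dotProduct_mulVec_pos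
  · ext i j
    fin_cases i <;> fin_cases j <;> simp [Mx, Matrix.conjTranspose_apply]
  · intro v hv
    rw [quad_aux, Complex.zero_lt_real]
    have h1 := Complex.normSq_nonneg (v 1 - Complex.I * v 3)
    have h2 := Complex.normSq_nonneg (v 2 + Complex.I * v 3 - 2 * Complex.I * v 0)
    have h3 := Complex.normSq_nonneg (v 0)
    have h4 := Complex.normSq_nonneg (v 0 + v 3)
    by_contra hn
    apply hv
    have e3 : v 0 = 0 := Complex.normSq_eq_zero.1 (by linarith)
    have e4 : v 0 + v 3 = 0 := Complex.normSq_eq_zero.1 (by linarith)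
    have e1 : v 1 - Complex.I * v 3 = 0 := Complex.normSq_eq_zero.1 (by linarith)
    have e2 : v 2 + Complex.I * v 3 - 2 * Complex.I * v 0 = 0 :=
      Complex.normSq_eq_zero.1 (by linarith)
    have f3 : v 3 = 0 := by simpa [e3] using e4
    have f1 : v 1 = 0 := by simpa [f3] using e1
    have f2 : v 2 = 0 := by simpa [f3, e3] using e2
    ext i
    fin_cases i <;> simp [e3, f1, f2, f3]

theorem im_zero_aux (s : ℂ) (r : ℝ) (hr : 0 ≤ r) (h : s ^ 2 = (r : ℂ)) : s.im = 0 := by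
  have h1 : s ^ 2 = ((Real.sqrt r : ℝ) : ℂ) ^ 2 := by
    rw [h, ← Complex.ofReal_pow, Real.sq_sqrt hr]
  rcases sq_eq_sq_iff_eq_or_eq_neg.1 h1 with h2 | h2 <;> simp [h2]

theorem hyp_aux : IsHyperbolic quartic ![1, 0, 0] := by
  refine ⟨by simp [quartic], ?_⟩
  intro p t h
  simp [complexify, quartic] at h
  set s : ℂ := t + (p 0 : ℂ) with hs
  have him : s.im = t.im := by simp [hs]
  rw [← him]
  set a : ℝ := p 1 ^ 2 + p 2 ^ 2 with ha
  set b : ℝ := p 1 ^ 2 - p 2 ^ 2 with hb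
  have ha0 : 0 ≤ a := by positivity
  have hD : 0 ≤ 4 * a ^ 2 - b ^ 2 := by
    have : 4 * a ^ 2 - b ^ 2 = 3 * a ^ 2 + 4 * (p 1 * p 2) ^ 2 := by rw [ha, hb]; ring
    rw [this]; positivity
  have hle : Real.sqrt (4 * a ^ 2 - b ^ 2) ≤ 2 * a := by
    apply Real.sqrt_le_iff.2
    exact ⟨by linarith, by nlinarith [sq_nonneg b]⟩
  have h0 := Real.sqrt_nonneg (4 * a ^ 2 - b ^ 2)
  have hq : (s ^ 2 - 2 * (a : ℂ)) ^ 2 = ((Real.sqrt (4 * a ^ 2 - b ^ 2) : ℝ) : ℂ) ^ 2 := by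
    rw [← Complex.ofReal_pow, Real.sq_sqrt hD, ha, hb]
    push_cast
    linear_combination h
  rcases sq_eq_sq_iff_eq_or_eq_neg.1 hq with h2 | h2
  · apply im_zero_aux s (2 * a + Real.sqrt (4 * a ^ 2 - b ^ 2)) (by linarith)
    push_cast
    linear_combination h2
  · apply im_zero_aux s (2 * a - Real.sqrt (4 * a ^ 2 - b ^ 2)) (by linarith)
    push_cast
    linear_combination h2

/-- The explicit Hermitian matrices `Mx, My, Mz` give a definite
determinantal representation `det (x Mx + y My + z Mz) = (1/256) f` of the quartic
`f = x⁴ - 4x²y² + y⁴ - 4x²z² - 2y²z² + z⁴`, with `Mx = 1·Mx + 0·My + 0·Mz` positive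
definite; consequently `f` is hyperbolic with respect to `e = (1,0,0)`. -/
theorem quartic_determinantal_representation :
    (pencil Mx My Mz).det = MvPolynomial.C (1 / 256 : ℂ) * complexify quartic ∧
    Mx.PosDef ∧ IsHyperbolic quartic ![1, 0, 0] :=
  ⟨det_aux, posDef_aux, hyp_aux⟩
end
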